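/- Let n ≥ 2 and A ⊆ {0,1,...,n-1} with 0, n-1 ∈ A, and suppose A is n-good (C_{A,n} + C_{A,n} = [0,2]). Let U_A be the set of z ∈ [0,2] with a unique unordered representation z = x + y, x, y ∈ C_{A,n}. Then either U_A = {0,2} or dim_H(U_A) ≥ log 2 / log n. -/

import Mathlib

open MeasureTheory Pointwise

def linCantor (n : ℕ) (A : Set ℕ) : Set ℝ :=
  {x | ∃ a : ℕ → ℕ, (∀ i, a i ∈ A) ∧ x = ∑' i : ℕ, (a i : ℝ) / n ^ (i + 1)}

/-!
If `z` has a unique representation and `n z = a + b + r` with `a, b ∈ A` and `r ∈ [0, 2]`, then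
`{a, b}` is determined by `z`, the remainder `r` has a unique representation, and every
representation of `r` is of the form `x + x` unless `a = b`. A pair of points whose digits always
agree consists of equal points, so a `z ∉ {0, 2}` with a unique representation yields an
`x` such that `x + x` has a unique representation. Following the orbit of `x` under
`x ↦ n x - a`, and recording on which side of `1 / 2` it lies, one finds two different digits that
can be concatenated freely, or digits that allow moving freely between both sides. Either way the
doubles with a unique representation contain a copy of the binary sequences in which two sequences
that first differ at index `k` are at distance at least a constant times `n ^ (-k)`.
-/

open Set Filter PiNat
open Real (ofDigits)
open scoped NNReal

lemma exists_forall_lt_mul {T : Set ℝ} (hT : BddAbove T) {c x : ℝ} (hc : 1 < c) (hx : x ∈ T)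
    (hx0 : 0 < x) : ∃ y ∈ T, ∀ z ∈ T, z < c * y := by
  have hsup : 0 < sSup T := hx0.trans_le (le_csSup hT hx)
  obtain ⟨y, hy, hlt⟩ := exists_lt_of_lt_csSup ⟨x, hx⟩ (div_lt_self hsup hc)
  exact ⟨y, hy, fun z hz => (le_csSup hT hz).trans_lt ((div_lt_iff₀' (by positivity)).1 hlt)⟩

section Dimension

lemma countable_setOf_eventuallyConst (α : Type*) [Countable α] :
    {τ : ℕ → α | EventuallyConst τ atTop}.Countable := by
  have hsub : {τ : ℕ → α | EventuallyConst τ atTop} ⊆ ⋃ k, {τ | ∀ j ≥ k, τ j = τ k} :=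
    fun τ hτ => mem_iUnion.2 (eventuallyConst_atTop.1 hτ)
  refine (countable_iUnion fun k => ?_).mono hsub
  refine (mapsTo_univ (fun τ (i : Fin (k + 1)) => τ i) _).countable_of_injOn ?_ (to_countable _)
  intro τ hτ τ' hτ' heq
  have hle : ∀ i ≤ k, τ i = τ' i := fun i hi => congrFun heq ⟨i, by omega⟩
  funext i
  rcases le_total i k with hi | hi
  · exact hle i hi
  · rw [hτ i hi, hτ' i hi, hle k le_rfl]

lemma eventuallyConst_shift_iff {α : Type*} (τ : ℕ → α) (k : ℕ) :
    EventuallyConst (fun i => τ (i + k)) atTop ↔ EventuallyConst τ atTop := by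
  change (map (τ ∘ (· + k)) atTop).Subsingleton ↔ _
  rw [← Filter.map_map, map_add_atTop_eq_nat, EventuallyConst]

lemma one_le_dimH_image_ofDigits {b : ℕ} (hb : 1 < b) {S : Set (ℕ → Fin b)}
    (hS : Sᶜ.Countable) : 1 ≤ dimH (ofDigits '' S) := by
  have hsub : Icc (0 : ℝ) 1 ⊆ ofDigits '' S ∪ ofDigits '' Sᶜ := by
    rw [← image_union, union_compl_self]
    exact Real.ofDigits_SurjOn hb
  have hinterior : (interior (Icc (0 : ℝ) 1)).Nonempty := by simp
  have hIcc : dimH (Icc (0 : ℝ) 1) = 1 := by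
    rw [Real.dimH_of_nonempty_interior hinterior, Module.finrank_self, Nat.cast_one]
  calc 1 = dimH (Icc (0 : ℝ) 1) := hIcc.symm
    _ ≤ dimH (ofDigits '' S ∪ ofDigits '' Sᶜ) := dimH_mono hsub
    _ = dimH (ofDigits '' S) := by
        rw [dimH_union, (hS.image _).dimH_zero, max_eq_left zero_le]

lemma dimH_image_le_of_edist_le {ι X Y : Type*} [EMetricSpace X] [EMetricSpace Y] {S : Set ι}
    {f : ι → Y} {g : ι → X} {C r : ℝ≥0} (hr : 0 < r)
    (h : ∀ i ∈ S, ∀ j ∈ S, edist (f i) (f j) ≤ C * edist (g i) (g j) ^ (r : ℝ)) :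
    dimH (f '' S) ≤ dimH (g '' S) / r := by
  rcases S.eq_empty_or_nonempty with rfl | ⟨i₀, -⟩
  · simp
  have : Nonempty ι := ⟨i₀⟩
  have hfactor : ∀ i ∈ S, f (Function.invFunOn g S (g i)) = f i := fun i hi => by
    have hmem : ∃ j ∈ S, g j = g i := ⟨i, hi, rfl⟩
    have hle := h _ (Function.invFunOn_mem hmem) i hi
    rw [Function.invFunOn_eq hmem, edist_self, ENNReal.zero_rpow_of_pos (NNReal.coe_pos.2 hr),
      mul_zero] at hle
    exact edist_le_zero.1 hle
  have hholder : HolderOnWith C r (f ∘ Function.invFunOn g S) (g '' S) := by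
    rintro _ ⟨i, hi, rfl⟩ _ ⟨j, hj, rfl⟩
    simpa only [Function.comp_apply, hfactor i hi, hfactor j hj] using h i hi j hj
  have himage : (f ∘ Function.invFunOn g S) '' (g '' S) = f '' S := by
    rw [image_image]
    exact image_congr hfactor
  exact himage ▸ hholder.dimH_image_le hr

-- The inverse of `g`, followed by `ofDigits`, is Hölder of exponent `logb β b`.
theorem logb_le_dimH_image {X : Type*} [MetricSpace X] {b : ℕ} (hb : 1 < b) {β c : ℝ} (hβ : 1 < β)
    (hc : 0 < c) {S : Set (ℕ → Fin b)} (hS : Sᶜ.Countable) {g : (ℕ → Fin b) → X}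
    (hg : ∀ τ ∈ S, ∀ τ' ∈ S, τ ≠ τ' → c * (β ^ firstDiff τ τ')⁻¹ ≤ dist (g τ) (g τ')) :
    ENNReal.ofReal (Real.logb β b) ≤ dimH (g '' S) := by
  set r := Real.logb β b
  have hr : 0 < r := Real.logb_pos hβ (mod_cast hb)
  have hβr : β ^ r = b := Real.rpow_logb (by linarith) hβ.ne' (by positivity)
  have hdist : ∀ τ ∈ S, ∀ τ' ∈ S,
      dist (ofDigits τ) (ofDigits τ') ≤ (c ^ r)⁻¹ * dist (g τ) (g τ') ^ r := by
    intro τ hτ τ' hτ'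
    rcases eq_or_ne τ τ' with rfl | hne
    · rw [dist_self]
      positivity
    calc dist (ofDigits τ) (ofDigits τ')
        ≤ ((b : ℝ) ^ firstDiff τ τ')⁻¹ :=
          Real.abs_ofDigits_sub_ofDigits_le fun i hi => apply_eq_of_lt_firstDiff hi
      _ = (c ^ r)⁻¹ * (c * (β ^ firstDiff τ τ')⁻¹) ^ r := by
          rw [Real.mul_rpow hc.le (by positivity), inv_mul_cancel_left₀ (by positivity),
            Real.inv_rpow (by positivity), ← Real.rpow_pow_comm (by positivity), hβr]
      _ ≤ (c ^ r)⁻¹ * dist (g τ) (g τ') ^ r := by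
          gcongr
          exact hg τ hτ τ' hτ' hne
  have hedist : ∀ τ ∈ S, ∀ τ' ∈ S, edist (ofDigits τ) (ofDigits τ') ≤
      ((c ^ r)⁻¹).toNNReal * edist (g τ) (g τ') ^ (r.toNNReal : ℝ) := by
    intro τ hτ τ' hτ'
    rw [Real.coe_toNNReal _ hr.le, edist_dist, edist_dist,
      ENNReal.ofReal_rpow_of_nonneg dist_nonneg hr.le, ← ENNReal.ofReal,
      ← ENNReal.ofReal_mul (by positivity)]
    exact ENNReal.ofReal_le_ofReal (hdist τ hτ τ' hτ')
  have hle : 1 ≤ dimH (g '' S) / r.toNNReal :=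
    (one_le_dimH_image_ofDigits hb hS).trans
      (dimH_image_le_of_edist_le (Real.toNNReal_pos.2 hr) hedist)
  have hr0 : (r.toNNReal : ENNReal) ≠ 0 := by simpa using hr
  rwa [ENNReal.le_div_iff_mul_le (Or.inl hr0) (Or.inl ENNReal.coe_ne_top), one_mul] at hle

end Dimension

section OfDigits

variable {b : ℕ}

lemma mul_ofDigits (d : ℕ → Fin b) :
    (b : ℝ) * ofDigits d = d 0 + ofDigits (fun i => d (i + 1)) := by
  have hb : (b : ℝ) ≠ 0 := mod_cast (d 0).pos.ne'
  rw [Real.ofDigits_eq_sum_add_ofDigits d 1]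
  simp only [Finset.sum_range_one, Real.ofDigitsTerm, zero_add, pow_one]
  field_simp

lemma pow_mul_ofDigits_sub_ofDigits {x y : ℕ → Fin b} {k : ℕ} (h : ∀ i < k, x i = y i) :
    (b : ℝ) ^ k * (ofDigits x - ofDigits y) =
      ofDigits (fun i => x (i + k)) - ofDigits (fun i => y (i + k)) := by
  have hb : (b : ℝ) ≠ 0 := mod_cast (x 0).pos.ne'
  have hsum : ∑ i ∈ Finset.range k, Real.ofDigitsTerm x i =
      ∑ i ∈ Finset.range k, Real.ofDigitsTerm y i :=
    Finset.sum_congr rfl fun i hi => by rw [Real.ofDigitsTerm, h i (Finset.mem_range.1 hi)]; rfl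
  rw [Real.ofDigits_eq_sum_add_ofDigits x k, Real.ofDigits_eq_sum_add_ofDigits y k, hsum]
  field_simp
  ring

lemma ofDigits_lt_ofDigits {x y : ℕ → Fin b} (hle : ∀ i, x i ≤ y i) {i : ℕ} (hlt : x i < y i) :
    ofDigits x < ofDigits y := by
  have hb : (0 : ℝ) < b := mod_cast (x 0).pos
  refine Summable.tsum_lt_tsum (i := i) (fun j => ?_) ?_ Real.summable_ofDigitsTerm
    Real.summable_ofDigitsTerm
  · have : (x j : ℝ) ≤ y j := mod_cast hle j
    unfold Real.ofDigitsTerm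
    gcongr
  · have : (x i : ℝ) < y i := mod_cast hlt
    unfold Real.ofDigitsTerm
    gcongr

lemma ofDigits_mem_Ioo {d : ℕ → Fin b} {i j : ℕ} (h : d i ≠ d j) :
    ofDigits d ∈ Ioo (0 : ℝ) 1 := by
  wlog hij : d i < d j generalizing i j
  · exact this h.symm (lt_of_le_of_ne (not_lt.1 hij) h.symm)
  have hb : 1 < b := by omega
  constructor
  · calc (0 : ℝ) = ofDigits (fun _ => (⟨0, by omega⟩ : Fin b)) := by
          simp [ofDigits, Real.ofDigitsTerm]
      _ < ofDigits d := ofDigits_lt_ofDigits (fun k => Nat.zero_le _) (i := j) (by grind)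
  · calc ofDigits d < ofDigits (fun _ => (⟨b - 1, by omega⟩ : Fin b)) :=
          ofDigits_lt_ofDigits (fun k => Nat.le_sub_one_of_lt (d k).2) (i := i) (by grind)
      _ = 1 := Real.ofDigits_const_last_eq_one' hb

end OfDigits

section UniquePairSums

/-- The elements of `C + C` that have only one representation `u + v` with `u, v ∈ C`, up to
swapping `u` and `v`. For `C = C_{A,n}` with `A` `n`-good this is the set `U_A`. -/
def uniquePairSums {G : Type*} [Add G] (C : Set G) : Set G :=
  {z ∈ C + C | ∀ u ∈ C, ∀ v ∈ C, ∀ u' ∈ C, ∀ v' ∈ C,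
    u + v = z → u' + v' = z → u = u' ∨ u = v'}

lemma existsUnique_pair_le_iff_mem_uniquePairSums {G : Type*} [AddCancelCommMonoid G]
    [LinearOrder G] {C : Set G} {z : G} :
    (∃! p : G × G, p.1 ∈ C ∧ p.2 ∈ C ∧ p.1 ≤ p.2 ∧ p.1 + p.2 = z) ↔ z ∈ uniquePairSums C := by
  constructor
  · rintro ⟨p, ⟨hp₁, hp₂, -, hpz⟩, huniq⟩
    have hfst : ∀ u ∈ C, ∀ v ∈ C, u + v = z → p = (u, v) ∨ p = (v, u) := by
      intro u hu v hv huv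
      rcases le_total u v with hle | hle
      · exact Or.inl (huniq (u, v) ⟨hu, hv, hle, huv⟩).symm
      · exact Or.inr (huniq (v, u) ⟨hv, hu, hle, (add_comm v u).trans huv⟩).symm
    refine ⟨⟨p.1, hp₁, p.2, hp₂, hpz⟩, fun u hu v hv u' hu' v' hv' h h' => ?_⟩
    rcases hfst u hu v hv h with rfl | rfl <;> rcases hfst u' hu' v' hv' h' with h | h <;> grind
  · rintro ⟨⟨x, hx, y, hy, hxy⟩, huniq⟩
    wlog hle : x ≤ y generalizing x y
    · exact this y hy x hx ((add_comm y x).trans hxy) (le_of_not_ge hle)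
    refine ⟨(x, y), ⟨hx, hy, hle, hxy⟩, ?_⟩
    rintro ⟨u, v⟩ ⟨hu, hv, huv, rfl⟩
    rcases huniq u hu v hv x hx y hy rfl hxy with rfl | rfl
    · rw [add_left_cancel hxy]
    · obtain rfl : x = v := add_right_cancel (hxy.trans (add_comm _ _))
      rw [le_antisymm hle huv]

lemma add_self_mem_uniquePairSums_of_isLeast {G : Type*} [AddCommMonoid G] [PartialOrder G]
    [IsOrderedCancelAddMonoid G] {C : Set G} {m : G} (hm : IsLeast C m) :
    m + m ∈ uniquePairSums C := by
  have heq : ∀ u ∈ C, ∀ v ∈ C, u + v = m + m → u = m := fun u hu v hv h =>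
    (((add_eq_add_iff_eq_and_eq (hm.2 hu) (hm.2 hv)).1 h.symm).1).symm
  exact ⟨add_mem_add hm.1 hm.1, fun u hu v hv u' hu' v' hv' h h' =>
    Or.inl ((heq u hu v hv h).trans (heq u' hu' v' hv' h').symm)⟩

lemma add_self_mem_uniquePairSums_of_isGreatest {G : Type*} [AddCommMonoid G] [PartialOrder G]
    [IsOrderedCancelAddMonoid G] {C : Set G} {m : G} (hm : IsGreatest C m) :
    m + m ∈ uniquePairSums C :=
  add_self_mem_uniquePairSums_of_isLeast (G := Gᵒᵈ) hm.dual

end UniquePairSums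

section LinCantor

variable {n : ℕ} {A : Set ℕ}

lemma ofDigits_mem_linCantor {d : ℕ → Fin n} (hd : ∀ i, (d i : ℕ) ∈ A) :
    ofDigits d ∈ linCantor n A :=
  ⟨fun i => d i, hd, tsum_congr fun _ => (div_eq_mul_inv _ _).symm⟩

lemma mem_linCantor_iff_ofDigits (hA : ∀ a ∈ A, a < n) {x : ℝ} :
    x ∈ linCantor n A ↔ ∃ d : ℕ → Fin n, (∀ i, (d i : ℕ) ∈ A) ∧ ofDigits d = x := by
  refine ⟨?_, fun ⟨d, hd, hx⟩ => hx ▸ ofDigits_mem_linCantor hd⟩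
  rintro ⟨a, ha, rfl⟩
  exact ⟨fun i => ⟨a i, hA _ (ha i)⟩, ha, tsum_congr fun _ => (div_eq_mul_inv _ _).symm⟩

lemma linCantor_subset_Icc (hA : ∀ a ∈ A, a < n) : linCantor n A ⊆ Icc 0 1 := by
  intro x hx
  obtain ⟨d, -, rfl⟩ := (mem_linCantor_iff_ofDigits hA).1 hx
  exact ⟨Real.ofDigits_nonneg d, Real.ofDigits_le_one d⟩

lemma isLeast_linCantor_zero (hA : ∀ a ∈ A, a < n) (h0 : 0 ∈ A) : IsLeast (linCantor n A) 0 :=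
  ⟨⟨fun _ => 0, fun _ => h0, by simp⟩, fun _ hx => (linCantor_subset_Icc hA hx).1⟩

lemma isGreatest_linCantor_one (hA : ∀ a ∈ A, a < n) (hn : 1 < n) (htop : n - 1 ∈ A) :
    IsGreatest (linCantor n A) 1 := by
  refine ⟨?_, fun _ hx => (linCantor_subset_Icc hA hx).2⟩
  rw [← Real.ofDigits_const_last_eq_one' hn]
  exact ofDigits_mem_linCantor fun _ => htop

lemma exists_mul_eq_add_of_mem_linCantor (hA : ∀ a ∈ A, a < n) {x : ℝ} (hx : x ∈ linCantor n A) :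
    ∃ a ∈ A, ∃ y ∈ linCantor n A, (n : ℝ) * x = a + y := by
  obtain ⟨d, hd, rfl⟩ := (mem_linCantor_iff_ofDigits hA).1 hx
  exact ⟨d 0, hd 0, _, ofDigits_mem_linCantor fun i => hd (i + 1), mul_ofDigits d⟩

lemma add_div_mem_linCantor (hA : ∀ a ∈ A, a < n) {a : ℕ} (ha : a ∈ A) {x : ℝ}
    (hx : x ∈ linCantor n A) : ((a : ℝ) + x) / n ∈ linCantor n A := by
  obtain ⟨d, hd, rfl⟩ := (mem_linCantor_iff_ofDigits hA).1 hx
  let e : ℕ → Fin n := fun | 0 => ⟨a, hA a ha⟩ | i + 1 => d i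
  have he : ∀ i, (e i : ℕ) ∈ A := by
    rintro (_ | i)
    · exact ha
    · exact hd i
  have hn : (n : ℝ) ≠ 0 := mod_cast (Nat.zero_lt_of_lt (hA a ha)).ne'
  rw [show ((a : ℝ) + ofDigits d) / n = ofDigits e by
    rw [div_eq_iff hn, mul_comm, mul_ofDigits e]]
  exact ofDigits_mem_linCantor he

end LinCantor

section Remainder

variable {n : ℕ} {A : Set ℕ} {z : ℝ} {a b : ℕ}

lemma add_eq_add_or_of_mem_uniquePairSums (hA : ∀ a ∈ A, a < n)
    (hz : z ∈ uniquePairSums (linCantor n A)) {a' b' : ℕ} (ha : a ∈ A) (hb : b ∈ A)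
    (ha' : a' ∈ A) (hb' : b' ∈ A) {u v u' v' : ℝ} (hu : u ∈ linCantor n A)
    (hv : v ∈ linCantor n A) (hu' : u' ∈ linCantor n A) (hv' : v' ∈ linCantor n A)
    (h : (n : ℝ) * z = a + b + (u + v)) (h' : (n : ℝ) * z = a' + b' + (u' + v')) :
    (a : ℝ) + u = a' + u' ∨ (a : ℝ) + u = b' + v' := by
  have hn : (n : ℝ) ≠ 0 := mod_cast (Nat.zero_lt_of_lt (hA a ha)).ne'
  have hquot := hz.2 _ (add_div_mem_linCantor hA ha hu) _ (add_div_mem_linCantor hA hb hv)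
    _ (add_div_mem_linCantor hA ha' hu') _ (add_div_mem_linCantor hA hb' hv')
    (by field_simp; linarith) (by field_simp; linarith)
  rwa [div_left_inj' hn, div_left_inj' hn] at hquot

lemma eq_of_mul_eq_add_of_ne (hA : ∀ a ∈ A, a < n) (hz : z ∈ uniquePairSums (linCantor n A))
    (ha : a ∈ A) (hb : b ∈ A) (hab : a ≠ b) {u v : ℝ} (hu : u ∈ linCantor n A)
    (hv : v ∈ linCantor n A) (h : (n : ℝ) * z = a + b + (u + v)) : u = v := by
  rcases add_eq_add_or_of_mem_uniquePairSums hA hz ha hb ha hb hu hv hv hu h (by linarith)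
    with hadd | hadd
  · linarith
  · exact absurd (Nat.cast_injective (R := ℝ) (add_right_cancel hadd)) hab

lemma remainder_mem_uniquePairSums (hA : ∀ a ∈ A, a < n)
    (hz : z ∈ uniquePairSums (linCantor n A)) (ha : a ∈ A) (hb : b ∈ A) {r : ℝ}
    (hr : r ∈ linCantor n A + linCantor n A) (h : (n : ℝ) * z = a + b + r) :
    r ∈ uniquePairSums (linCantor n A) := by
  refine ⟨hr, fun u hu v hv u' hu' v' hv' huv huv' => ?_⟩
  rcases eq_or_ne a b with rfl | hab
  · rcases add_eq_add_or_of_mem_uniquePairSums hA hz ha ha ha ha hu hv hu' hv' (huv ▸ h)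
      (huv' ▸ h) with hadd | hadd
    · exact Or.inl (add_left_cancel hadd)
    · exact Or.inr (add_left_cancel hadd)
  · have := eq_of_mul_eq_add_of_ne hA hz ha hb hab hu hv (huv ▸ h)
    have := eq_of_mul_eq_add_of_ne hA hz ha hb hab hu' hv' (huv' ▸ h)
    left
    linarith

end Remainder

/-- `A` is an `n`-good digit set: `{0, n - 1} ⊆ A ⊆ {0, …, n - 1}` and
`C_{A,n} + C_{A,n} = [0, 2]`. -/
structure IsGoodDigitSet (n : ℕ) (A : Set ℕ) : Prop where
  one_lt : 1 < n
  zero_mem : 0 ∈ A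
  last_mem : n - 1 ∈ A
  lt : ∀ a ∈ A, a < n
  add_self : linCantor n A + linCantor n A = Icc 0 2

namespace IsGoodDigitSet

variable {n : ℕ} {A : Set ℕ} {z : ℝ} {a b : ℕ}

lemma isLeast_zero (hG : IsGoodDigitSet n A) : IsLeast (linCantor n A) 0 :=
  isLeast_linCantor_zero hG.lt hG.zero_mem

lemma isGreatest_one (hG : IsGoodDigitSet n A) : IsGreatest (linCantor n A) 1 :=
  isGreatest_linCantor_one hG.lt hG.one_lt hG.last_mem

lemma uniquePairSums_subset (hG : IsGoodDigitSet n A) :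
    uniquePairSums (linCantor n A) ⊆ Icc 0 2 :=
  fun _ hz => hG.add_self ▸ hz.1

lemma one_notMem_uniquePairSums (hG : IsGoodDigitSet n A) :
    1 ∉ uniquePairSums (linCantor n A) := by
  intro h
  have hn := hG.one_lt
  have h01 : (0 : ℝ) = 1 := eq_of_mul_eq_add_of_ne hG.lt h hG.zero_mem hG.last_mem (by omega)
    hG.isLeast_zero.1 hG.isGreatest_one.1 (by push_cast [Nat.cast_sub hn.le]; ring)
  exact zero_ne_one h01

-- The carry also gives the representation `n z = a + (b + 1) + u`, and one of the two has
-- distinct digits, which forces `u ∈ {0, 1}` and leaves the other with remainder `1`.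
lemma ne_add_one (hG : IsGoodDigitSet n A) (hz : z ∈ uniquePairSums (linCantor n A))
    (ha : a ∈ A) (hb : b ∈ A) (hb' : b + 1 ∈ A) {u : ℝ} (hu : u ∈ linCantor n A) :
    (n : ℝ) * z ≠ a + b + (u + 1) := by
  intro h
  have h' : (n : ℝ) * z = a + (b + 1 : ℕ) + (u + 0) := by push_cast; linarith
  have h0 := hG.isLeast_zero.1
  have h1 := hG.isGreatest_one.1
  have hone := hG.one_notMem_uniquePairSums
  rcases eq_or_ne a b with rfl | hab
  · obtain rfl := eq_of_mul_eq_add_of_ne hG.lt hz ha hb' (by omega) hu h0 h'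
    exact hone (remainder_mem_uniquePairSums hG.lt hz ha hb ⟨0, h0, 1, h1, zero_add 1⟩
      (by linarith))
  · obtain rfl := eq_of_mul_eq_add_of_ne hG.lt hz ha hb hab hu h1 h
    exact hone (remainder_mem_uniquePairSums hG.lt hz ha hb' ⟨1, h1, 0, h0, add_zero 1⟩
      (by linarith))

lemma le_of_add_eq_add (hG : IsGoodDigitSet n A) (hz : z ∈ uniquePairSums (linCantor n A))
    {b' : ℕ} (ha : a ∈ A) (hb : b ∈ A) (hb' : b' ∈ A) {u v v' : ℝ} (hu : u ∈ linCantor n A)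
    (hv : v ∈ linCantor n A) (hv' : v' ∈ linCantor n A) (h : (n : ℝ) * z = a + b + (u + v))
    (hbv : (b : ℝ) + v = b' + v') : b' ≤ b := by
  by_contra! hlt
  have hv1 := (linCantor_subset_Icc hG.lt hv).2
  have hv0 := (linCantor_subset_Icc hG.lt hv').1
  obtain rfl : b' = b + 1 := by
    have : (b' : ℝ) ≤ b + 1 := by linarith
    have : b' ≤ b + 1 := mod_cast this
    omega
  push_cast at hbv
  obtain rfl : v = 1 := by linarith
  exact hG.ne_add_one hz ha hb hb' hu h

lemma digits_eq_of_add_eq_add (hG : IsGoodDigitSet n A)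
    (hz : z ∈ uniquePairSums (linCantor n A)) {a' b' : ℕ} (ha : a ∈ A) (hb : b ∈ A)
    (ha' : a' ∈ A) (hb' : b' ∈ A) {u v u' v' : ℝ} (hu : u ∈ linCantor n A)
    (hv : v ∈ linCantor n A) (hu' : u' ∈ linCantor n A) (hv' : v' ∈ linCantor n A)
    (h : (n : ℝ) * z = a + b + (u + v)) (hau : (a : ℝ) + u = a' + u')
    (hbv : (b : ℝ) + v = b' + v') : a = a' ∧ b = b' :=
  ⟨le_antisymm
      (hG.le_of_add_eq_add hz hb ha' ha hv hu' hu (by linarith) hau.symm)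
      (hG.le_of_add_eq_add hz hb ha ha' hv hu hu' (by linarith) hau),
    le_antisymm
      (hG.le_of_add_eq_add hz ha hb' hb hu hv' hv (by linarith) hbv.symm)
      (hG.le_of_add_eq_add hz ha hb hb' hu hv hv' h hbv)⟩

lemma digits_unique (hG : IsGoodDigitSet n A) (hz : z ∈ uniquePairSums (linCantor n A))
    {a' b' : ℕ} (ha : a ∈ A) (hb : b ∈ A) (ha' : a' ∈ A) (hb' : b' ∈ A) {r r' : ℝ}
    (hr : r ∈ Icc (0 : ℝ) 2) (hr' : r' ∈ Icc (0 : ℝ) 2) (h : (n : ℝ) * z = a + b + r)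
    (h' : (n : ℝ) * z = a' + b' + r') : (a = a' ∧ b = b') ∨ (a = b' ∧ b = a') := by
  rw [← hG.add_self] at hr hr'
  obtain ⟨u, hu, v, hv, rfl⟩ := hr
  obtain ⟨u', hu', v', hv', rfl⟩ := hr'
  rcases add_eq_add_or_of_mem_uniquePairSums hG.lt hz ha hb ha' hb' hu hv hu' hv' h h'
    with hau | hau
  · exact Or.inl (hG.digits_eq_of_add_eq_add hz ha hb ha' hb' hu hv hu' hv' h hau (by linarith))
  · exact Or.inr (hG.digits_eq_of_add_eq_add hz ha hb hb' ha' hu hv hv' hu' h hau (by linarith))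

lemma exists_eq_add_add (hG : IsGoodDigitSet n A) {w : ℝ} (hw : w ∈ Icc (0 : ℝ) (2 * n)) :
    ∃ a ∈ A, ∃ b ∈ A, ∃ r ∈ Icc (0 : ℝ) 2, w = a + b + r := by
  have hn : (0 : ℝ) < n := mod_cast hG.one_lt.pos
  have hmem : w / n ∈ linCantor n A + linCantor n A := by
    rw [hG.add_self]
    exact ⟨div_nonneg hw.1 hn.le, (div_le_iff₀ hn).2 hw.2⟩
  obtain ⟨x, hx, y, hy, hxy⟩ := hmem
  obtain ⟨a, ha, u, hu, hxu⟩ := exists_mul_eq_add_of_mem_linCantor hG.lt hx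
  obtain ⟨b, hb, v, hv, hyv⟩ := exists_mul_eq_add_of_mem_linCantor hG.lt hy
  refine ⟨a, ha, b, hb, u + v, hG.add_self ▸ add_mem_add hu hv, ?_⟩
  rw [eq_div_iff hn.ne'] at hxy
  linarith

-- Shifting `n z` by half a unit gives a representation with a different digit sum, and undoing
-- the shift keeps its remainder in `[0, 2]` because digit sums are integers.
lemma remainder_ne_zero (hG : IsGoodDigitSet n A) (hz : z ∈ uniquePairSums (linCantor n A))
    (hz0 : z ≠ 0) (ha : a ∈ A) (hb : b ∈ A) : (n : ℝ) * z ≠ a + b + 0 := by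
  intro h
  have hn : (0 : ℝ) < n := mod_cast hG.one_lt.pos
  have hzIcc := hG.uniquePairSums_subset hz
  have hab : 1 ≤ a + b := by
    by_contra! hlt
    have : (a : ℝ) + b = 0 := mod_cast Nat.lt_one_iff.1 hlt
    exact hz0 (by simpa [this, hn.ne'] using h)
  have hab' : (1 : ℝ) ≤ a + b := mod_cast hab
  obtain ⟨p, hp, q, hq, r, hr, hpq⟩ := hG.exists_eq_add_add (w := a + b - 1 / 2)
    ⟨by linarith, by nlinarith [hzIcc.2]⟩
  have hlt : p + q < a + b := by
    have : (p : ℝ) + q < a + b := by linarith [hr.1]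
    exact mod_cast this
  have hle : a + b ≤ p + q + 2 := by
    have : (a : ℝ) + b < p + q + 3 := by linarith [hr.2]
    exact Nat.lt_succ_iff.1 (mod_cast this)
  have hle' : (a : ℝ) + b ≤ p + q + 2 := mod_cast hle
  have := hG.digits_unique hz ha hb hp hq ⟨le_rfl, by norm_num⟩
    (r' := r + 1 / 2) ⟨by linarith [hr.1], by linarith⟩ h (by linarith)
  omega

lemma remainder_ne_two (hG : IsGoodDigitSet n A) (hz : z ∈ uniquePairSums (linCantor n A))
    (hz2 : z ≠ 2) (ha : a ∈ A) (hb : b ∈ A) : (n : ℝ) * z ≠ a + b + 2 := by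
  intro h
  have hn : (0 : ℝ) < n := mod_cast hG.one_lt.pos
  have hzIcc := hG.uniquePairSums_subset hz
  have hab : a + b + 3 ≤ 2 * n := by
    have : (a : ℝ) + b + 2 < 2 * n := by
      have := mul_lt_mul_of_pos_left (lt_of_le_of_ne hzIcc.2 hz2) hn
      linarith
    exact Nat.succ_le_of_lt (mod_cast this)
  have hab' : (a : ℝ) + b + 3 ≤ 2 * n := mod_cast hab
  obtain ⟨p, hp, q, hq, r, hr, hpq⟩ := hG.exists_eq_add_add (w := a + b + 5 / 2)
    ⟨by positivity, by linarith⟩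
  have hlt : a + b < p + q := by
    have : (a : ℝ) + b < p + q := by linarith [hr.2]
    exact mod_cast this
  have hle : p + q ≤ a + b + 2 := by
    have : (p : ℝ) + q < a + b + 3 := by linarith [hr.1]
    exact Nat.lt_succ_iff.1 (mod_cast this)
  have hle' : (p : ℝ) + q ≤ a + b + 2 := mod_cast hle
  have := hG.digits_unique hz ha hb hp hq ⟨by norm_num, le_rfl⟩
    (r' := r - 1 / 2) ⟨by linarith, by linarith [hr.2]⟩ h (by linarith)
  omega

lemma remainder_mem_sdiff (hG : IsGoodDigitSet n A)
    (hz : z ∈ uniquePairSums (linCantor n A) \ {0, 2}) (ha : a ∈ A) (hb : b ∈ A) {r : ℝ}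
    (hr : r ∈ linCantor n A + linCantor n A) (h : (n : ℝ) * z = a + b + r) :
    r ∈ uniquePairSums (linCantor n A) \ {0, 2} := by
  obtain ⟨hz, hz02⟩ := hz
  rw [mem_insert_iff, mem_singleton_iff, not_or] at hz02
  refine ⟨remainder_mem_uniquePairSums hG.lt hz ha hb hr h, ?_⟩
  rintro (rfl | rfl)
  · exact hG.remainder_ne_zero hz hz02.1 ha hb h
  · exact hG.remainder_ne_two hz hz02.2 ha hb h

end IsGoodDigitSet

/-- The points `x` of `C_{A,n}` whose double is a nontrivial element of `U_A`, that is, an element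
other than `0` and `2`. -/
def uniqueDoubles (n : ℕ) (A : Set ℕ) : Set ℝ :=
  {x ∈ linCantor n A | x + x ∈ uniquePairSums (linCantor n A) \ {0, 2}}

/-- The two sides of `1 / 2` in the open unit interval: `false` is the lower one. -/
def openHalf : Bool → Set ℝ
  | false => Ioo 0 (1 / 2)
  | true => Ioo (1 / 2) 1

/-- `IsTransition n A s t a` says that prepending the digit `a ∈ A` moves `(0, 1)` into `openHalf s`
and that, if it moves `y ∈ openHalf t` to `x`, then every representation of `x + x` begins with the
digits `a` and `a`. -/
structure IsTransition (n : ℕ) (A : Set ℕ) (s t : Bool) (a : ℕ) : Prop where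
  mem : a ∈ A
  mem_openHalf : ∀ x, ∀ y ∈ Ioo (0 : ℝ) 1, n * x = a + y → x ∈ openHalf s
  eq_of_add_eq : ∀ y ∈ openHalf t, ∀ p ∈ A, ∀ q ∈ A, ∀ r ∈ Icc (0 : ℝ) 2,
    (p : ℝ) + q + r = a + a + (y + y) → p = a

/-- The digit whose repetition is the expansion of the endpoint `s.toNat` of `[0, 1]`. -/
def endDigit (n : ℕ) (s : Bool) : ℕ :=
  s.toNat * (n - 1)

section OpenHalf

variable {n : ℕ} {s t : Bool} {x y : ℝ}

lemma openHalf_subset_Ioo (s : Bool) : openHalf s ⊆ Ioo 0 1 := by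
  cases s
  · exact Ioo_subset_Ioo_right (by norm_num)
  · exact Ioo_subset_Ioo_left (by norm_num)

lemma eq_of_mem_openHalf (hs : x ∈ openHalf s) (ht : x ∈ openHalf t) : s = t := by
  cases s <;> cases t <;> first | rfl | linarith [hs.1, hs.2, ht.1, ht.2]

lemma exists_mem_openHalf (hx : x ∈ Ioo 0 1) (hne : x ≠ 1 / 2) : ∃ s, x ∈ openHalf s :=
  (lt_or_gt_of_ne hne).elim (fun h => ⟨false, hx.1, h⟩) fun h => ⟨true, h, hx.2⟩

lemma int_add_mem_Icc_of_mem_openHalf {k : ℤ} (hx : x ∈ openHalf s) (hy : y ∈ openHalf s)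
    (h : (k : ℝ) + (x + x) ∈ Icc 0 2) : (k : ℝ) + (y + y) ∈ Icc 0 2 := by
  obtain ⟨h0, h2⟩ := h
  cases s <;> obtain ⟨hx0, hx1⟩ := hx <;> obtain ⟨hy0, hy1⟩ := hy
  · have hk : (-1 : ℝ) < k ∧ (k : ℝ) < 2 := ⟨by linarith, by linarith⟩
    have hk' : 0 ≤ k ∧ k ≤ 1 := by norm_cast at hk; omega
    have : (0 : ℝ) ≤ k ∧ (k : ℝ) ≤ 1 := mod_cast hk'
    constructor <;> linarith
  · have hk : (-2 : ℝ) < k ∧ (k : ℝ) < 1 := ⟨by linarith, by linarith⟩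
    have hk' : -1 ≤ k ∧ k ≤ 0 := by norm_cast at hk; omega
    have : (-1 : ℝ) ≤ k ∧ (k : ℝ) ≤ 0 := mod_cast hk'
    constructor <;> linarith

lemma mem_openHalf_of_mul_eq_add {a : ℕ} (ha : 2 * a + 1 ≠ n) {x' y' : ℝ} (hx : x ∈ openHalf s)
    (hy : y ∈ Ioo 0 1) (hy' : y' ∈ Ioo 0 1) (h : (n : ℝ) * x = a + y)
    (h' : (n : ℝ) * x' = a + y') : x' ∈ openHalf s := by
  have hn : (0 : ℝ) < n := (Nat.cast_nonneg n).lt_of_ne fun hn => by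
    rw [← hn, zero_mul] at h
    linarith [hy.1, (Nat.cast_nonneg a : (0 : ℝ) ≤ a)]
  have hx' : x' = (a + y') / n := by rw [← h', mul_div_cancel_left₀ _ hn.ne']
  have : (0 : ℝ) ≤ a := Nat.cast_nonneg a
  subst hx'
  cases s
  · have hlt : (2 : ℝ) * a < n := by nlinarith [hx.2, hy.1]
    have hle : 2 * a + 2 ≤ n := by norm_cast at hlt; omega
    have hle' : (2 : ℝ) * a + 2 ≤ n := mod_cast hle
    exact ⟨div_pos (by linarith [hy'.1]) hn, (div_lt_iff₀ hn).2 (by linarith [hy'.2])⟩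
  · have hlt : (n : ℝ) < 2 * a + 2 := by nlinarith [hx.1, hy.2]
    have hle : n ≤ 2 * a := by norm_cast at hlt; omega
    have hle' : (n : ℝ) ≤ 2 * a := mod_cast hle
    have han : (a : ℝ) < n := by nlinarith [hx.2, hy.1]
    have han' : (a : ℝ) + 1 ≤ n := mod_cast han
    exact ⟨(lt_div_iff₀ hn).2 (by linarith [hy'.1]), (div_lt_one hn).2 (by linarith [hy'.2])⟩

end OpenHalf

namespace IsTransition

variable {n : ℕ} {A : Set ℕ} {s t s' t' : Bool} {a a' : ℕ}

lemma ne (h : IsTransition n A s t a) (h' : IsTransition n A s' t' a') (hs : s ≠ s')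
    (hn : n ≠ 0) : a ≠ a' := by
  rintro rfl
  have hmul : (n : ℝ) * ((a + 1 / 2) / n) = a + 1 / 2 := mul_div_cancel₀ _ (mod_cast hn)
  have hhalf : (1 / 2 : ℝ) ∈ Ioo 0 1 := by norm_num
  exact hs (eq_of_mem_openHalf (h.mem_openHalf _ _ hhalf hmul) (h'.mem_openHalf _ _ hhalf hmul))

-- If `a' = a + 1`, then `(a, a')` is a further pair of digits for the double of one of the points,
-- unless `y` is in the lower half and `y'` in the upper one.
lemma add_one_le_add (h : IsTransition n A s t a) (h' : IsTransition n A s' t' a') (hlt : a < a')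
    {y y' : ℝ} (hy : y ∈ openHalf t) (hy' : y' ∈ openHalf t') :
    (a : ℝ) + y + 1 ≤ a' + y' := by
  have hy01 := openHalf_subset_Ioo t hy
  have hy'01 := openHalf_subset_Ioo t' hy'
  rcases Nat.lt_or_ge (a + 1) a' with hgap | hle
  · have : (a : ℝ) + 2 ≤ a' := mod_cast hgap
    linarith [hy01.2, hy'01.1]
  obtain rfl : a' = a + 1 := by omega
  push_cast
  have hlow : y ≤ 1 / 2 := by
    by_contra! hgt
    have := h.eq_of_add_eq y hy _ h'.mem _ h.mem (y + y - 1) ⟨by linarith, by linarith [hy01.2]⟩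
      (by push_cast; ring)
    omega
  have hhigh : 1 / 2 ≤ y' := by
    by_contra! hgt
    have := h'.eq_of_add_eq y' hy' _ h.mem _ h'.mem (y' + y' + 1)
      ⟨by linarith [hy'01.1], by linarith⟩ (by push_cast; ring)
    omega
  linarith

end IsTransition

namespace IsGoodDigitSet

variable {n : ℕ} {A : Set ℕ} {s t : Bool} {x y : ℝ} {a : ℕ}

-- In a representation `x + y` with `|x - y|` nearly maximal the first digits differ, since equal
-- digits would leave a remainder with `n` times this distance.
lemma uniqueDoubles_nonempty (hG : IsGoodDigitSet n A)
    (h : (uniquePairSums (linCantor n A) \ {0, 2}).Nonempty) : (uniqueDoubles n A).Nonempty := by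
  by_contra! hempty
  have hnot : ∀ x ∈ linCantor n A, x + x ∉ uniquePairSums (linCantor n A) \ {0, 2} :=
    fun x hx hxx => eq_empty_iff_forall_notMem.1 hempty x ⟨hx, hxx⟩
  let T : Set ℝ := {d | ∃ x ∈ linCantor n A, ∃ y ∈ linCantor n A,
    x + y ∈ uniquePairSums (linCantor n A) \ {0, 2} ∧ |x - y| = d}
  have hT : BddAbove T := by
    refine ⟨1, ?_⟩
    rintro _ ⟨x, hx, y, hy, -, rfl⟩
    exact Real.dist_le_of_mem_Icc_01 (linCantor_subset_Icc hG.lt hx) (linCantor_subset_Icc hG.lt hy)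
  obtain ⟨z, hz⟩ := h
  obtain ⟨x, hx, y, hy, rfl⟩ := hz.1.1
  have hxy : x ≠ y := by
    rintro rfl
    exact hnot x hx hz
  obtain ⟨_, ⟨x, hx, y, hy, hz, rfl⟩, hmax⟩ := exists_forall_lt_mul hT (c := n)
    (mod_cast hG.one_lt) ⟨x, hx, y, hy, hz, rfl⟩ (abs_sub_pos.2 hxy)
  obtain ⟨a, ha, u, hu, hxu⟩ := exists_mul_eq_add_of_mem_linCantor hG.lt hx
  obtain ⟨b, hb, v, hv, hyv⟩ := exists_mul_eq_add_of_mem_linCantor hG.lt hy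
  have hmul : (n : ℝ) * (x + y) = a + b + (u + v) := by linarith
  have huv := hG.remainder_mem_sdiff hz ha hb (add_mem_add hu hv) hmul
  rcases eq_or_ne a b with rfl | hab
  · have hdist : |u - v| = n * |x - y| := by
      rw [← Nat.abs_cast n, ← abs_mul, mul_sub, hxu, hyv, add_sub_add_left_eq_sub]
    exact (hmax _ ⟨u, hu, v, hv, huv, rfl⟩).ne hdist
  · obtain rfl := eq_of_mul_eq_add_of_ne hG.lt hz.1 ha hb hab hu hv hmul
    exact hnot u hu huv

lemma remainder_mem_uniqueDoubles (hG : IsGoodDigitSet n A) (hx : x ∈ uniqueDoubles n A)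
    (ha : a ∈ A) (hy : y ∈ linCantor n A) (h : (n : ℝ) * x = a + y) : y ∈ uniqueDoubles n A :=
  ⟨hy, hG.remainder_mem_sdiff hx.2 ha ha (add_mem_add hy hy) (by linarith)⟩

lemma exists_mem_openHalf_of_mem_uniqueDoubles (hG : IsGoodDigitSet n A)
    (hx : x ∈ uniqueDoubles n A) : ∃ s, x ∈ openHalf s := by
  obtain ⟨hxC, hxU, hx02⟩ := hx
  rw [mem_insert_iff, mem_singleton_iff, not_or] at hx02
  have hx01 := linCantor_subset_Icc hG.lt hxC
  refine exists_mem_openHalf ⟨hx01.1.lt_of_ne ?_, hx01.2.lt_of_ne ?_⟩ ?_ <;> rintro rfl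
  · exact hx02.1 (add_zero 0)
  · exact hx02.2 one_add_one_eq_two
  · exact hG.one_notMem_uniquePairSums (add_halves (1 : ℝ) ▸ hxU)

lemma isTransition_of_mul_eq_add (hG : IsGoodDigitSet n A) (hx : x ∈ uniqueDoubles n A)
    (hxs : x ∈ openHalf s) (ha : a ∈ A) (hyt : y ∈ openHalf t) (h : (n : ℝ) * x = a + y) :
    IsTransition n A s t a := by
  have hn := hG.one_lt
  have hy01 := openHalf_subset_Ioo t hyt
  have huniq : ∀ p ∈ A, ∀ q ∈ A, ∀ r ∈ Icc (0 : ℝ) 2, (p : ℝ) + q + r = a + a + (y + y) →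
      p = a ∧ q = a := fun p hp q hq r hr hpq => by
    have := hG.digits_unique hx.2.1 hp hq ha ha hr (r' := y + y)
      ⟨by linarith [hy01.1], by linarith [hy01.2]⟩ (by linarith) (by linarith)
    tauto
  have hodd : 2 * a + 1 ≠ n := fun hodd => by
    have hcast : ((n - 1 : ℕ) : ℝ) = a + a := by
      rw [← hodd, Nat.add_sub_cancel]
      push_cast
      ring
    have := huniq 0 hG.zero_mem (n - 1) hG.last_mem (y + y)
      ⟨by linarith [hy01.1], by linarith [hy01.2]⟩ (by rw [hcast]; push_cast; ring)
    omega
  refine ⟨ha, fun x' y' hy' h' => mem_openHalf_of_mul_eq_add hodd hxs hy01 hy' h h', ?_⟩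
  intro y' hy' p hp q hq r hr hpq
  have hr' : ((2 * a - p - q : ℤ) : ℝ) + (y + y) ∈ Icc 0 2 := by
    refine int_add_mem_Icc_of_mem_openHalf hy' hyt ?_
    convert hr using 1
    push_cast
    linarith
  refine (huniq p hp q hq _ hr' ?_).1
  push_cast
  ring

lemma endDigit_mem (hG : IsGoodDigitSet n A) (s : Bool) : endDigit n s ∈ A := by
  cases s
  · simpa [endDigit] using hG.zero_mem
  · simpa [endDigit] using hG.last_mem

lemma mul_toNat_eq_endDigit_add (hG : IsGoodDigitSet n A) (s : Bool) :
    (n : ℝ) * s.toNat = endDigit n s + s.toNat := by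
  have hn := hG.one_lt
  push_cast [endDigit, Nat.cast_sub hn.le]
  ring

lemma isTransition_endDigit (hG : IsGoodDigitSet n A) (s : Bool) :
    IsTransition n A s s (endDigit n s) := by
  have hn : (2 : ℝ) ≤ n := mod_cast hG.one_lt
  have hend := hG.mul_toNat_eq_endDigit_add s
  refine ⟨hG.endDigit_mem s, fun x y hy hxy => ?_, fun y hy p hp q hq r hr hpq => ?_⟩
  · cases s <;> simp only [Bool.toNat_false, Bool.toNat_true, Nat.cast_zero, Nat.cast_one] at hend
    · exact ⟨by nlinarith [hy.1], by nlinarith [hy.2]⟩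
    · exact ⟨by nlinarith [hy.1], by nlinarith [hy.2]⟩
  · have hpn := hG.lt p hp
    have hqn := hG.lt q hq
    cases s <;> simp only [Bool.toNat_false, Bool.toNat_true, Nat.cast_zero, Nat.cast_one] at hend
    · have : (p : ℝ) + q < 1 := by linarith [hr.1, hy.2]
      have : p + q < 1 := mod_cast this
      simp only [endDigit, Bool.toNat_false]
      omega
    · have : (2 : ℝ) * n < p + q + 3 := by linarith [hr.2, hy.1]
      have : 2 * n < p + q + 3 := mod_cast this
      simp only [endDigit, Bool.toNat_true]
      omega

-- Near the maximal distance to the endpoint `s.toNat`, the end digit would multiply the distance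
-- by `n`.
lemma exists_isTransition (hG : IsGoodDigitSet n A)
    (h : (uniqueDoubles n A ∩ openHalf s).Nonempty) :
    ∃ a t, IsTransition n A s t a ∧ (uniqueDoubles n A ∩ openHalf t).Nonempty ∧
      (t = s → a ≠ endDigit n s) := by
  let T : Set ℝ := {d | ∃ x ∈ uniqueDoubles n A ∩ openHalf s, |x - s.toNat| = d}
  have hmem : ∀ x ∈ uniqueDoubles n A ∩ openHalf s, x ∈ Ioo 0 1 :=
    fun x hx => openHalf_subset_Ioo s hx.2
  have hs : (s.toNat : ℝ) ∈ Icc 0 1 := ⟨Nat.cast_nonneg _, mod_cast s.toNat_le⟩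
  have hT : BddAbove T := by
    refine ⟨1, ?_⟩
    rintro _ ⟨x, hx, rfl⟩
    exact Real.dist_le_of_mem_Icc_01 (Ioo_subset_Icc_self (hmem x hx)) hs
  obtain ⟨x, hx⟩ := h
  have hne : x ≠ s.toNat := by
    rintro rfl
    cases s <;> simpa using hmem _ hx
  obtain ⟨_, ⟨x, hx, rfl⟩, hmax⟩ := exists_forall_lt_mul hT (c := n) (mod_cast hG.one_lt)
    ⟨x, hx, rfl⟩ (abs_sub_pos.2 hne)
  obtain ⟨a, ha, y, hy, hxy⟩ := exists_mul_eq_add_of_mem_linCantor hG.lt hx.1.1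
  have hyD := hG.remainder_mem_uniqueDoubles hx.1 ha hy hxy
  obtain ⟨t, hyt⟩ := hG.exists_mem_openHalf_of_mem_uniqueDoubles hyD
  refine ⟨a, t, hG.isTransition_of_mul_eq_add hx.1 hx.2 ha hyt hxy, ⟨y, hyD, hyt⟩, ?_⟩
  rintro rfl rfl
  refine (hmax _ ⟨y, ⟨hyD, hyt⟩, rfl⟩).ne ?_
  rw [← Nat.abs_cast n, ← abs_mul, mul_sub, hxy, hG.mul_toNat_eq_endDigit_add,
    add_sub_add_left_eq_sub]

end IsGoodDigitSet

/-- A family of transitions, `l i j` from `side i` to `side j`, whose digit determines `i`. A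
sequence in `ι` is encoded by the digits `l i j` of its consecutive pairs `i, j`. -/
structure IsCoding {ι : Type*} (n : ℕ) (A : Set ℕ) (side : ι → Bool) (l : ι → ι → Fin n) :
    Prop where
  isTransition : ∀ i j, IsTransition n A (side i) (side j) (l i j)
  ne : ∀ i j i' j', i ≠ i' → l i j ≠ l i' j'

/-- The point whose `i`-th base `n` digit is `l (τ i) (τ (i + 1))`. -/
noncomputable def codePoint {ι : Type*} {n : ℕ} (l : ι → ι → Fin n) (τ : ℕ → ι) : ℝ :=
  ofDigits fun i => l (τ i) (τ (i + 1))

lemma mul_codePoint {ι : Type*} {n : ℕ} (l : ι → ι → Fin n) (τ : ℕ → ι) :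
    n * codePoint l τ = l (τ 0) (τ 1) + codePoint l (fun i => τ (i + 1)) :=
  mul_ofDigits _

lemma IsTransition.exists_isCoding_of_ne {n : ℕ} {A : Set ℕ} (hA : ∀ a ∈ A, a < n) {s : Bool}
    {a a' : ℕ} (h : IsTransition n A s s a) (h' : IsTransition n A s s a') (hne : a ≠ a') :
    ∃ (side : Fin 2 → Bool) (l : Fin 2 → Fin 2 → Fin n), IsCoding n A side l := by
  let d : Fin n := ⟨a, hA a h.mem⟩
  let d' : Fin n := ⟨a', hA a' h'.mem⟩
  have hdd' : d ≠ d' := fun hdd' => hne (congrArg Fin.val hdd')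
  refine ⟨fun _ => s, fun i _ => if i = 0 then d else d', fun i _ => ?_, fun i _ i' _ hi => ?_⟩
  · by_cases hi : i = 0 <;> simpa [hi]
  · fin_cases i <;> fin_cases i' <;> simp_all [hdd'.symm]

lemma exists_isCoding_of_forall_exists_isTransition {n : ℕ} {A : Set ℕ} (hA : ∀ a ∈ A, a < n)
    (h : ∀ s t, ∃ a, IsTransition n A s t a) :
    ∃ (side : Fin 2 → Bool) (l : Fin 2 → Fin 2 → Fin n), IsCoding n A side l := by
  choose d hd using h
  have hn : n ≠ 0 := (Nat.zero_lt_of_lt (hA _ (hd true true).mem)).ne'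
  let l : Fin 2 → Fin 2 → Fin n := fun i j =>
    ⟨d (finTwoEquiv i) (finTwoEquiv j), hA _ (hd _ _).mem⟩
  exact ⟨finTwoEquiv, l, fun _ _ => hd _ _, fun _ _ _ _ hi heq =>
    (hd _ _).ne (hd _ _) (finTwoEquiv.injective.ne hi) hn (congrArg Fin.val heq)⟩

-- If no side has a transition to itself besides its end digit, then every side has a transition to
-- the opposite one.
theorem IsGoodDigitSet.exists_isCoding {n : ℕ} {A : Set ℕ} (hG : IsGoodDigitSet n A)
    (h : (uniqueDoubles n A).Nonempty) :
    ∃ (side : Fin 2 → Bool) (l : Fin 2 → Fin 2 → Fin n), IsCoding n A side l := by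
  by_cases hself : ∃ s a, IsTransition n A s s a ∧ a ≠ endDigit n s
  · obtain ⟨s, a, ha, hne⟩ := hself
    exact ha.exists_isCoding_of_ne hG.lt (hG.isTransition_endDigit s) hne
  push Not at hself
  have hflip : ∀ s, (uniqueDoubles n A ∩ openHalf s).Nonempty →
      (∃ a, IsTransition n A s (!s) a) ∧ (uniqueDoubles n A ∩ openHalf !s).Nonempty := by
    intro s hs
    obtain ⟨a, t, ha, ht, hne⟩ := hG.exists_isTransition hs
    obtain rfl : t = !s := Bool.eq_not.2 fun hts => hne hts (hself s a (hts ▸ ha))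
    exact ⟨⟨a, ha⟩, ht⟩
  obtain ⟨x, hx⟩ := h
  obtain ⟨s₀, hs₀⟩ := hG.exists_mem_openHalf_of_mem_uniqueDoubles hx
  have hhalf : ∀ s, (uniqueDoubles n A ∩ openHalf s).Nonempty := by
    intro s
    rcases Bool.eq_or_eq_not s s₀ with rfl | rfl
    · exact ⟨x, hx, hs₀⟩
    · exact (hflip s₀ ⟨x, hx, hs₀⟩).2
  refine exists_isCoding_of_forall_exists_isTransition hG.lt fun s t => ?_
  rcases Bool.eq_or_eq_not t s with rfl | rfl
  · exact ⟨_, hG.isTransition_endDigit t⟩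
  · exact (hflip s (hhalf s)).1

namespace IsCoding

variable {ι : Type*} {n : ℕ} {A : Set ℕ} {side : ι → Bool} {l : ι → ι → Fin n} {τ τ' : ℕ → ι}

lemma codePoint_mem_linCantor (hl : IsCoding n A side l) (τ : ℕ → ι) :
    codePoint l τ ∈ linCantor n A :=
  ofDigits_mem_linCantor fun _ => (hl.isTransition _ _).mem

lemma codePoint_mem_Ioo (hl : IsCoding n A side l) (hτ : ¬EventuallyConst τ atTop) :
    codePoint l τ ∈ Ioo 0 1 := by
  obtain ⟨i, hi⟩ : ∃ i, τ i ≠ τ 0 := by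
    by_contra! hconst
    exact hτ (eventuallyConst_atTop.2 ⟨0, fun i _ => hconst i⟩)
  exact ofDigits_mem_Ioo (i := i) (j := 0) (hl.ne _ _ _ _ hi)

lemma codePoint_mem_openHalf (hl : IsCoding n A side l) (hτ : ¬EventuallyConst τ atTop) :
    codePoint l τ ∈ openHalf (side (τ 0)) :=
  (hl.isTransition _ _).mem_openHalf _ _
    (hl.codePoint_mem_Ioo (mt (eventuallyConst_shift_iff τ 1).1 hτ)) (mul_codePoint l τ)

-- The first digits of `u` and `v` are forced, so `n` times `u - codePoint l τ` is again a
-- difference of this kind, and none of them can be of nearly maximal size.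
lemma eq_codePoint_of_add_eq (hl : IsCoding n A side l) (hA : ∀ a ∈ A, a < n) (hn : 1 < n)
    (hτ : ¬EventuallyConst τ atTop) {u v : ℝ} (hu : u ∈ linCantor n A) (hv : v ∈ linCantor n A)
    (h : u + v = codePoint l τ + codePoint l τ) : u = codePoint l τ := by
  by_contra hne
  let T : Set ℝ := {d | ∃ τ : ℕ → ι, ¬EventuallyConst τ atTop ∧ ∃ u ∈ linCantor n A,
    ∃ v ∈ linCantor n A, u + v = codePoint l τ + codePoint l τ ∧ |u - codePoint l τ| = d}
  have hIcc := linCantor_subset_Icc hA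
  have hT : BddAbove T := by
    refine ⟨1, ?_⟩
    rintro _ ⟨τ, -, u, hu, -, -, -, rfl⟩
    exact Real.dist_le_of_mem_Icc_01 (hIcc hu) (hIcc (hl.codePoint_mem_linCantor τ))
  obtain ⟨_, ⟨τ, hτ, u, hu, v, hv, h, rfl⟩, hmax⟩ := exists_forall_lt_mul hT (c := n)
    (mod_cast hn) ⟨τ, hτ, u, hu, v, hv, h, rfl⟩ (abs_sub_pos.2 hne)
  have hτ' := mt (eventuallyConst_shift_iff τ 1).1 hτ
  obtain ⟨p, hp, u', hu', hup⟩ := exists_mul_eq_add_of_mem_linCantor hA hu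
  obtain ⟨q, hq, v', hv', hvq⟩ := exists_mul_eq_add_of_mem_linCantor hA hv
  have hmul := mul_codePoint l τ
  have hsum : (p : ℝ) + q + (u' + v') = (l (τ 0) (τ 1) : ℕ) + (l (τ 0) (τ 1) : ℕ) +
      (codePoint l (fun i => τ (i + 1)) + codePoint l fun i => τ (i + 1)) := by
    linear_combination (n : ℝ) * h - hup - hvq + 2 * hmul
  have hr : u' + v' ∈ Icc (0 : ℝ) 2 :=
    ⟨add_nonneg (hIcc hu').1 (hIcc hv').1, by linarith [(hIcc hu').2, (hIcc hv').2]⟩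
  have hforced := (hl.isTransition (τ 0) (τ 1)).eq_of_add_eq _ (hl.codePoint_mem_openHalf hτ')
  obtain rfl := hforced p hp q hq _ hr hsum
  obtain rfl := hforced q hq _ hp _ hr (by linarith)
  refine (hmax _ ⟨_, hτ', u', hu', v', hv', by linarith, rfl⟩).ne ?_
  rw [← Nat.abs_cast n, ← abs_mul, mul_sub, hup, hmul, add_sub_add_left_eq_sub]

lemma codePoint_add_self_mem (hl : IsCoding n A side l) (hA : ∀ a ∈ A, a < n) (hn : 1 < n)
    (hτ : ¬EventuallyConst τ atTop) :
    codePoint l τ + codePoint l τ ∈ uniquePairSums (linCantor n A) :=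
  ⟨add_mem_add (hl.codePoint_mem_linCantor τ) (hl.codePoint_mem_linCantor τ),
    fun _ hu _ hv _ hu' _ hv' h h' => Or.inl <| (hl.eq_codePoint_of_add_eq hA hn hτ hu hv h).trans
      (hl.eq_codePoint_of_add_eq hA hn hτ hu' hv' h').symm⟩

lemma one_le_mul_abs_codePoint_sub (hl : IsCoding n A side l) (hτ : ¬EventuallyConst τ atTop)
    (hτ' : ¬EventuallyConst τ' atTop) (hne : l (τ 0) (τ 1) ≠ l (τ' 0) (τ' 1)) :
    1 ≤ n * |codePoint l τ - codePoint l τ'| := by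
  wlog hlt : l (τ 0) (τ 1) < l (τ' 0) (τ' 1) generalizing τ τ'
  · rw [abs_sub_comm]
    exact this hτ' hτ hne.symm (hne.lt_or_gt.resolve_left hlt)
  have hle := (hl.isTransition _ _).add_one_le_add (hl.isTransition _ _) hlt
    (hl.codePoint_mem_openHalf (mt (eventuallyConst_shift_iff τ 1).1 hτ))
    (hl.codePoint_mem_openHalf (mt (eventuallyConst_shift_iff τ' 1).1 hτ'))
  rw [← mul_codePoint, ← mul_codePoint] at hle
  calc (1 : ℝ) ≤ |n * codePoint l τ - n * codePoint l τ'| := by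
        rw [abs_sub_comm]
        exact (by linarith : (1 : ℝ) ≤ _).trans (le_abs_self _)
    _ = n * |codePoint l τ - codePoint l τ'| := by rw [← mul_sub, abs_mul, Nat.abs_cast]

lemma inv_pow_le_abs_codePoint_sub (hl : IsCoding n A side l) (hτ : ¬EventuallyConst τ atTop)
    (hτ' : ¬EventuallyConst τ' atTop) (hne : τ ≠ τ') :
    ((n : ℝ) ^ (firstDiff τ τ' + 1))⁻¹ ≤ |codePoint l τ - codePoint l τ'| := by
  set x : ℕ → Fin n := fun i => l (τ i) (τ (i + 1))
  set y : ℕ → Fin n := fun i => l (τ' i) (τ' (i + 1))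
  set k := firstDiff x y
  have hn : 1 ≤ (n : ℝ) := mod_cast (x 0).pos
  have hxy : x (firstDiff τ τ') ≠ y (firstDiff τ τ') :=
    hl.ne _ _ _ _ (apply_firstDiff_ne hne)
  have hk : k ≤ firstDiff τ τ' := not_lt.1 fun hlt => hxy (apply_eq_of_lt_firstDiff hlt)
  have hkne : x k ≠ y k := apply_firstDiff_ne fun heq => hxy (congrFun heq _)
  have hshift : (n : ℝ) ^ k * (codePoint l τ - codePoint l τ') =
      codePoint l (fun i => τ (i + k)) - codePoint l (fun i => τ' (i + k)) := by
    simp only [codePoint, add_right_comm _ 1 k]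
    exact pow_mul_ofDigits_sub_ofDigits fun i hi => apply_eq_of_lt_firstDiff hi
  have hone : 1 ≤ n * |codePoint l (fun i => τ (i + k)) - codePoint l (fun i => τ' (i + k))| :=
    hl.one_le_mul_abs_codePoint_sub (mt (eventuallyConst_shift_iff τ k).1 hτ)
      (mt (eventuallyConst_shift_iff τ' k).1 hτ') (by simpa [add_comm 1 k] using hkne)
  rw [← hshift, abs_mul, abs_pow, Nat.abs_cast, ← mul_assoc, ← pow_succ'] at hone
  calc ((n : ℝ) ^ (firstDiff τ τ' + 1))⁻¹ ≤ ((n : ℝ) ^ (k + 1))⁻¹ := by gcongr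
    _ ≤ |codePoint l τ - codePoint l τ'| := by
        rw [inv_le_iff_one_le_mul₀' (by positivity)]
        exact hone

end IsCoding

theorem IsCoding.logb_le_dimH_uniquePairSums {b n : ℕ} {A : Set ℕ} {side : Fin b → Bool}
    {l : Fin b → Fin b → Fin n} (hl : IsCoding n A side l) (hA : ∀ a ∈ A, a < n) (hn : 1 < n)
    (hb : 1 < b) : ENNReal.ofReal (Real.logb n b) ≤ dimH (uniquePairSums (linCantor n A)) := by
  let S : Set (ℕ → Fin b) := {τ | ¬EventuallyConst τ atTop}
  have hS : Sᶜ.Countable :=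
    (countable_setOf_eventuallyConst (Fin b)).mono fun τ hτ => not_not.1 hτ
  have hn0 : (0 : ℝ) < n := mod_cast hn.pos
  refine (logb_le_dimH_image hb (β := n) (mod_cast hn) (inv_pos.2 hn0) hS
    (g := fun τ => codePoint l τ + codePoint l τ) fun τ hτ τ' hτ' hne => ?_).trans (dimH_mono ?_)
  · calc (n : ℝ)⁻¹ * ((n : ℝ) ^ firstDiff τ τ')⁻¹ = ((n : ℝ) ^ (firstDiff τ τ' + 1))⁻¹ := by
          rw [pow_succ', mul_inv]
      _ ≤ |codePoint l τ - codePoint l τ'| := hl.inv_pow_le_abs_codePoint_sub hτ hτ' hne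
      _ ≤ 2 * |codePoint l τ - codePoint l τ'| := le_mul_of_one_le_left (abs_nonneg _) one_le_two
      _ = dist (codePoint l τ + codePoint l τ) (codePoint l τ' + codePoint l τ') := by
          rw [Real.dist_eq, add_sub_add_comm, ← two_mul, abs_mul, abs_two]
  · rintro _ ⟨τ, hτ, rfl⟩
    exact hl.codePoint_add_self_mem hA hn hτ

/-- Dichotomy: if `A` is `n`-good then the uniqueness set `U_A` is either `{0,2}`
or has Hausdorff dimension at least `log 2 / log n`. -/
theorem uniqueness_dichotomy (n : ℕ) (hn : 2 ≤ n) (A : Set ℕ)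
    (h0 : 0 ∈ A) (htop : n - 1 ∈ A) (hA : ∀ a ∈ A, a < n)
    (hgood : linCantor n A + linCantor n A = Set.Icc (0 : ℝ) 2) :
    ({z : ℝ | z ∈ Set.Icc (0 : ℝ) 2 ∧
        ∃! p : ℝ × ℝ, p.1 ∈ linCantor n A ∧ p.2 ∈ linCantor n A ∧
          p.1 ≤ p.2 ∧ p.1 + p.2 = z} = {0, 2}) ∨
    ENNReal.ofReal (Real.log 2 / Real.log n) ≤
      dimH {z : ℝ | z ∈ Set.Icc (0 : ℝ) 2 ∧
        ∃! p : ℝ × ℝ, p.1 ∈ linCantor n A ∧ p.2 ∈ linCantor n A ∧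
          p.1 ≤ p.2 ∧ p.1 + p.2 = z} := by
  have hG : IsGoodDigitSet n A := ⟨hn, h0, htop, hA, hgood⟩
  simp only [existsUnique_pair_le_iff_mem_uniquePairSums]
  change Icc 0 2 ∩ uniquePairSums (linCantor n A) = {0, 2} ∨
    _ ≤ dimH (Icc 0 2 ∩ uniquePairSums (linCantor n A))
  rw [inter_eq_right.2 hG.uniquePairSums_subset]
  rcases (uniquePairSums (linCantor n A) \ {0, 2}).eq_empty_or_nonempty with hempty | hne
  · have hzero := add_self_mem_uniquePairSums_of_isLeast hG.isLeast_zero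
    have htwo := add_self_mem_uniquePairSums_of_isGreatest hG.isGreatest_one
    rw [add_zero] at hzero
    rw [one_add_one_eq_two] at htwo
    exact Or.inl ((sdiff_eq_empty.1 hempty).antisymm (pair_subset hzero htwo))
  · obtain ⟨side, l, hl⟩ := hG.exists_isCoding (hG.uniqueDoubles_nonempty hne)
    right
    rw [Real.log_div_log]
    exact hl.logb_le_dimH_uniquePairSums hA hn one_lt_two
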